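/- Let D be a bounded domain in ℂⁿ and let φ be a psh peak function for a point p ∈ ∂D. Then for any bounded open neighborhood U of p and ANY open neighborhood V of p with compact closure contained in U, there exists a constant m > 0 such that K_D(z;X) ≥ e^{mφ(z)} K_{D∩U}(z;X) for all z ∈ D ∩ V and all X ∈ ℂⁿ. -/

import Mathlib

open Set Metric Filter Topology
open scoped Classical

noncomputable section

/-- `ℂⁿ` with the Euclidean norm. -/
abbrev Cn (n : ℕ) := EuclideanSpace ℂ (Fin n)

/-- A function `u : ℂⁿ → [-∞,∞)` (with values in `EReal`) is plurisubharmonic on `D` if it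
is upper semicontinuous on `D` and satisfies the sub-mean-value inequality on every closed
disc in a complex line contained in `D` (stated via continuous majorants on the boundary
circle, so as to handle the value `-∞`). -/
def PSHOn {n : ℕ} (u : Cn n → EReal) (D : Set (Cn n)) : Prop :=
  UpperSemicontinuousOn u D ∧
  ∀ a ∈ D, ∀ b : Cn n, ∀ r : ℝ, 0 < r →
    (∀ t : ℂ, ‖t‖ ≤ r → a + t • b ∈ D) →
    ∀ g : ℝ → ℝ, Continuous g →
      (∀ θ : ℝ, u (a + ((r : ℂ) * Complex.exp (θ * Complex.I)) • b) ≤ (g θ : EReal)) →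
      u a ≤ (((1 / (2 * Real.pi)) * ∫ θ in (0:ℝ)..(2 * Real.pi), g θ : ℝ) : EReal)

/-- `φ` is a plurisubharmonic peak function for `D` at the boundary point `p`:
`φ` is psh on `D`, `φ(z) → 0` as `z → p` in `D`, and `sup_{D∖U} φ < 0` for every
neighborhood `U` of `p`. -/
def IsPshPeakFn {n : ℕ} (D : Set (Cn n)) (p : Cn n) (φ : Cn n → EReal) : Prop :=
  PSHOn φ D ∧ Tendsto φ (𝓝[D] p) (𝓝 (0 : EReal)) ∧
  ∀ U ∈ 𝓝 p, ∃ c : ℝ, c < 0 ∧ ∀ z ∈ D \ U, φ z ≤ (c : EReal)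

/-- The real exponential extended to `EReal`, with `exp(-∞) = 0` (the value at `⊤`,
irrelevant here, is also set to `0`). -/
def erexp (x : EReal) : ℝ := if x = ⊥ then 0 else if x = ⊤ then 0 else Real.exp x.toReal

/-- The Kobayashi metric of `D`:
`K_D(z;X) = inf {|α| : ∃ f : 𝔻 → D holomorphic, f 0 = z, α • f' 0 = X}`. -/
def kobayashi {n : ℕ} (D : Set (Cn n)) (z X : Cn n) : ℝ :=
  sInf {c : ℝ | ∃ α : ℂ, c = ‖α‖ ∧ ∃ f : ℂ → Cn n,
    DifferentiableOn ℂ f (ball (0:ℂ) 1) ∧ MapsTo f (ball (0:ℂ) 1) D ∧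
    f 0 = z ∧ α • deriv f 0 = X}

/-!
If a disc `f` centred at `z ∈ V` leaves `U` at the point `ζ`, then a Möbius map swapping `0` and
`ζ` gives a disc whose centre lies outside `U`. By the Schwarz lemma, it stays away from `V ∪ {p}`
on a disc of fixed radius `δ`, where therefore `φ ≤ c < 0`. The two-constants estimate on the
annulus `δ ≤ |ξ| < 1` bounds `φ z` by a fixed positive multiple of `log |ζ|`, that is,
`e^{mφ(z)} ≤ |ζ|`. Hence all discs through `z` map the disc of radius `e^{mφ(z)}` into `U`, and
rescaling them compares the two metrics.

The two-constants estimate rests on the maximum principle for `φ ∘ g - h` with `g` a disc and `h`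
harmonic, although psh functions are only tested on complex lines. Maximize instead
`φ (g ζ + w) + ε|ζ|² - h ζ - B|w|²` over `ζ` and small `w`. Moving `w` along with `ζ` straightens
`g` at the maximum into its tangent line, at a cost `B|w|²` that is harmonic up to `o(|ζ - ζ₀|²)`,
so that the sub-mean value property on this line contradicts the strict subharmonicity of `ε|ζ|²`.
-/

section MeanValue

open InnerProductSpace

variable {n : ℕ} {φ : Cn n → EReal} {D : Set (Cn n)}

lemma PSHOn.le_of_le_harmonicOnNhd (hφ : PSHOn φ D) {ζ₀ : ℂ} {r : ℝ} (hr : 0 < r) {a b : Cn n}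
    (hD : ∀ ζ ∈ closedBall ζ₀ r, a + (ζ - ζ₀) • b ∈ D) {H : ℂ → ℝ}
    (hH : HarmonicOnNhd H (closedBall ζ₀ r))
    (hle : ∀ ζ ∈ sphere ζ₀ r, φ (a + (ζ - ζ₀) • b) ≤ H ζ) : φ a ≤ H ζ₀ := by
  have ha : a ∈ D := by simpa using hD ζ₀ (mem_closedBall_self hr.le)
  have hmean : Real.circleAverage H ζ₀ r = H ζ₀ :=
    InnerProductSpace.HarmonicOnNhd.circleAverage_eq (by rwa [abs_of_pos hr])
  rw [← hmean, Real.circleAverage_def, smul_eq_mul, ← one_div]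
  refine hφ.2 a ha b r hr (fun t ht ↦ ?_) (fun θ ↦ H (circleMap ζ₀ r θ)) ?_ fun θ ↦ ?_
  · simpa using hD (ζ₀ + t) (by simpa using ht)
  · exact hH.continuousOn.comp_continuous (continuous_circleMap ζ₀ r)
      fun θ ↦ circleMap_mem_closedBall ζ₀ hr.le θ
  · simpa [circleMap] using hle _ (circleMap_mem_sphere ζ₀ hr.le θ)

lemma PSHOn.lt_of_eventually_le_sub_mul_sq (hφ : PSHOn φ D) (hD : IsOpen D) {a b : Cn n}
    (ha : a ∈ D) {ζ₀ : ℂ} {H : ℂ → ℝ} (hH : HarmonicAt H ζ₀) {ε : ℝ} (hε : 0 < ε)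
    (hle : ∀ᶠ ζ in 𝓝 ζ₀, φ (a + (ζ - ζ₀) • b) ≤ ((H ζ - ε * ‖ζ - ζ₀‖ ^ 2 : ℝ) : EReal)) :
    φ a < H ζ₀ := by
  have hmem : ∀ᶠ ζ in 𝓝 ζ₀, a + (ζ - ζ₀) • b ∈ D :=
    ContinuousAt.eventually_mem (by fun_prop) (hD.mem_nhds (by simpa using ha))
  obtain ⟨r, hr, hball⟩ := nhds_basis_closedBall.eventually_iff.1
    (hmem.and (hle.and hH.eventually))
  calc φ a ≤ ((H ζ₀ - ε * r ^ 2 : ℝ) : EReal) :=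
        hφ.le_of_le_harmonicOnNhd (H := fun ζ ↦ H ζ - ε * r ^ 2) hr (fun ζ hζ ↦ (hball hζ).1)
          (fun ζ hζ ↦ (hball hζ).2.2.sub (harmonicAt_const _)) fun ζ hζ ↦ by
            rw [← mem_sphere_iff_norm.1 hζ]
            exact (hball (sphere_subset_closedBall hζ)).2.1
    _ < H ζ₀ := EReal.coe_lt_coe_iff.2 (sub_lt_self _ (by positivity))

lemma eventually_mul_norm_sub_sub_smul_deriv_sq_le {𝕜 E : Type*} [NontriviallyNormedField 𝕜]
    [NormedAddCommGroup E] [NormedSpace 𝕜 E] {g : 𝕜 → E} {x : 𝕜} (hg : DifferentiableAt 𝕜 g x)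
    (B : ℝ) {ε : ℝ} (hε : 0 < ε) :
    ∀ᶠ y in 𝓝 x, B * ‖g y - g x - (y - x) • deriv g x‖ ^ 2 ≤ ε * ‖y - x‖ ^ 2 := by
  have hlittle :=
    ((hasDerivAt_iff_isLittleO.1 hg.hasDerivAt).norm_norm.pow two_pos).const_mul_left B
  filter_upwards [hlittle.bound hε] with y hy
  exact (le_abs_self _).trans (by simpa using hy)

lemma le_coe_sub_of_add_coe_le {x : EReal} {s t : ℝ} (h : x + s ≤ t) : x ≤ ((t - s : ℝ) : EReal) :=
  (EReal.le_sub_iff_add_le (.inl (EReal.coe_ne_bot s)) (.inl (EReal.coe_ne_top s))).2 h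

lemma exists_harmonicAt_penalty_le {E : Type*} [NormedAddCommGroup E] [InnerProductSpace ℂ E]
    {g : ℂ → E} {ζ₀ : ℂ} (hg : AnalyticAt ℂ g ζ₀) (w : E) (B : ℝ) {ε : ℝ} (hε : 0 < ε) :
    ∃ H : ℂ → ℝ, HarmonicAt H ζ₀ ∧ H ζ₀ = 0 ∧ ∀ᶠ ζ in 𝓝 ζ₀,
      B * (‖w - (g ζ - g ζ₀ - (ζ - ζ₀) • deriv g ζ₀)‖ ^ 2 - ‖w‖ ^ 2) -
        ε * (‖ζ‖ ^ 2 - ‖ζ₀‖ ^ 2) ≤ H ζ - ε / 2 * ‖ζ - ζ₀‖ ^ 2 := by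
  let R : ℂ → E := fun ζ ↦ g ζ - g ζ₀ - (ζ - ζ₀) • deriv g ζ₀
  let F : ℂ → ℂ := fun ζ ↦ -(2 * ε * inner ℂ ζ₀ (ζ - ζ₀) + 2 * B * inner ℂ w (R ζ))
  have hF : AnalyticAt ℂ F ζ₀ := by
    have h₁ : AnalyticAt ℂ (fun ζ ↦ inner ℂ ζ₀ (ζ - ζ₀)) ζ₀ :=
      ((innerSL ℂ ζ₀).analyticAt _).comp (by fun_prop)
    have h₂ : AnalyticAt ℂ (fun ζ ↦ inner ℂ w (R ζ)) ζ₀ :=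
      ((innerSL ℂ w).analyticAt _).comp (by fun_prop)
    fun_prop
  refine ⟨fun ζ ↦ (F ζ).re, hF.harmonicAt_re, by simp [F, R], ?_⟩
  filter_upwards [eventually_mul_norm_sub_sub_smul_deriv_sq_le hg.differentiableAt B
    (half_pos hε)] with ζ (hRζ : B * ‖R ζ‖ ^ 2 ≤ ε / 2 * ‖ζ - ζ₀‖ ^ 2)
  have hζ : ‖ζ‖ ^ 2 = ‖ζ₀‖ ^ 2 + 2 * (inner ℂ ζ₀ (ζ - ζ₀)).re + ‖ζ - ζ₀‖ ^ 2 := by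
    have := norm_add_sq (𝕜 := ℂ) ζ₀ (ζ - ζ₀)
    rwa [add_sub_cancel] at this
  have hw : ‖w - R ζ‖ ^ 2 = ‖w‖ ^ 2 - 2 * (inner ℂ w (R ζ)).re + ‖R ζ‖ ^ 2 :=
    norm_sub_sq (𝕜 := ℂ) w (R ζ)
  have hFre : (F ζ).re = -(2 * ε * (inner ℂ ζ₀ (ζ - ζ₀)).re + 2 * B * (inner ℂ w (R ζ)).re) := by
    simp [F]
  simp only [hFre, hζ, hw, R] at hRζ ⊢
  linarith

lemma PSHOn.not_isLocalMax_translate (hφ : PSHOn φ D) (hD : IsOpen D) {g : ℂ → Cn n} {h : ℂ → ℝ}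
    {ζ₀ : ℂ} (hg : AnalyticAt ℂ g ζ₀) (hh : HarmonicAt h ζ₀) {ε : ℝ} (hε : 0 < ε) (B : ℝ)
    {w : Cn n} (hx : g ζ₀ + w ∈ D) (hbot : φ (g ζ₀ + w) ≠ ⊥) (htop : φ (g ζ₀ + w) ≠ ⊤) :
    ¬ IsLocalMax (fun q : Cn n × ℂ ↦ φ (g q.2 + q.1) + ((ε * ‖q.2‖ ^ 2 - h q.2 : ℝ) : EReal) +
      ((-(B * ‖q.1‖ ^ 2) : ℝ) : EReal)) (w, ζ₀) := by
  intro hmax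
  obtain ⟨y, hy⟩ : ∃ y : ℝ, φ (g ζ₀ + w) = y := ⟨_, (EReal.coe_toReal htop hbot).symm⟩
  obtain ⟨P, hP, hP₀, hPle⟩ := exists_harmonicAt_penalty_le hg w B hε
  let R : ℂ → Cn n := fun ζ ↦ g ζ - g ζ₀ - (ζ - ζ₀) • deriv g ζ₀
  let H : ℂ → ℝ := fun ζ ↦ y + (h ζ - h ζ₀) + P ζ
  have hH : HarmonicAt H ζ₀ :=
    ((harmonicAt_const y).add (hh.sub (harmonicAt_const (h ζ₀)))).add hP
  -- Along this curve the translated disc `g ζ + (w - R ζ)` is a complex line.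
  have hcurve : Tendsto (fun ζ ↦ (w - R ζ, ζ)) (𝓝 ζ₀) (𝓝 (w, ζ₀)) := by
    have hR : ContinuousAt R ζ₀ := by have := hg.continuousAt; fun_prop
    have : ContinuousAt (fun ζ ↦ (w - R ζ, ζ)) ζ₀ := by fun_prop
    simpa [ContinuousAt, R] using this
  have hmaj : ∀ᶠ ζ in 𝓝 ζ₀, φ (g ζ₀ + w + (ζ - ζ₀) • deriv g ζ₀) ≤
      ((H ζ - ε / 2 * ‖ζ - ζ₀‖ ^ 2 : ℝ) : EReal) := by
    filter_upwards [hcurve.eventually hmax, hPle] with ζ hζ hPζ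
    have hline : g ζ + (w - R ζ) = g ζ₀ + w + (ζ - ζ₀) • deriv g ζ₀ := by
      simp only [R]; abel
    simp only [hline, hy, ← EReal.coe_add] at hζ
    rw [add_assoc, ← EReal.coe_add] at hζ
    refine (le_coe_sub_of_add_coe_le hζ).trans (EReal.coe_le_coe_iff.2 ?_)
    simp only [H, R]
    linarith
  have hlt := hφ.lt_of_eventually_le_sub_mul_sq hD hx hH (half_pos hε) hmaj
  simp [hy, H, hP₀] at hlt

end MeanValue

section PenalizedMaximum

lemma upperSemicontinuousOn_add_coe {X : Type*} [TopologicalSpace X] {S : Set X} {u : X → EReal}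
    {f : X → ℝ} (hu : UpperSemicontinuousOn u S) (hf : ContinuousOn f S) :
    UpperSemicontinuousOn (fun x ↦ u x + (f x : EReal)) S :=
  hu.add' (continuous_coe_real_ereal.comp_continuousOn hf).upperSemicontinuousOn fun _ _ ↦
    EReal.continuousAt_add (.inr (EReal.coe_ne_bot _)) (.inr (EReal.coe_ne_top _))

variable {E X : Type*} [NormedAddCommGroup E] [ProperSpace E] [TopologicalSpace X]
  {K : Set X} {ρ a : ℝ} {u : E × X → EReal}

lemma exists_forall_mem_interior_of_lt_sub_penalty (hK : IsCompact K) (hKc : IsClosed K)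
    (hρ : 0 < ρ) (husc : UpperSemicontinuousOn u (closedBall 0 ρ ×ˢ K))
    (htop : ∀ q ∈ closedBall 0 ρ ×ˢ K, u q < ⊤) (hfr : ∀ x ∈ frontier K, u (0, x) < a) :
    ∃ B : ℝ, ∀ q ∈ closedBall 0 ρ ×ˢ K, a < u q + ((-(B * ‖q.1‖ ^ 2) : ℝ) : EReal) →
      q ∈ ball 0 ρ ×ˢ interior K := by
  obtain ⟨M, hM⟩ : ∃ M : ℝ, ∀ q ∈ closedBall 0 ρ ×ˢ K, u q < M := by
    rcases (closedBall (0 : E) ρ ×ˢ K).eq_empty_or_nonempty with hempty | hne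
    · simp [hempty]
    obtain ⟨q, hq, hmax⟩ := husc.exists_isMaxOn hne ((isCompact_closedBall 0 ρ).prod hK)
    obtain ⟨M, hqM, -⟩ := EReal.lt_iff_exists_real_btwn.1 (htop q hq)
    exact ⟨M, fun q' hq' ↦ (hmax hq').trans_lt hqM⟩
  obtain ⟨r, hr, htube⟩ : ∃ r > 0, ∀ w ∈ ball (0 : E) r, ∀ x ∈ frontier K,
      (w, x) ∈ closedBall 0 ρ ×ˢ K → u (w, x) < a := by
    refine Metric.eventually_nhds_iff_ball.1 <|
      (hK.of_isClosed_subset isClosed_frontier hKc.frontier_subset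
        ).eventually_forall_of_forall_eventually fun x hx ↦ ?_
    exact eventually_nhdsWithin_iff.1
      (husc (0, x) ⟨mem_closedBall_self hρ.le, hKc.frontier_subset hx⟩ a (hfr x hx))
  set s := min r ρ
  have hs : 0 < s := lt_min hr hρ
  refine ⟨|M - a| / s ^ 2, fun ⟨w, x⟩ hq hlt ↦ ?_⟩
  have hws : ‖w‖ < s := by
    by_contra! hsw
    have hMa : M - a ≤ |M - a| / s ^ 2 * ‖w‖ ^ 2 := calc
      M - a ≤ |M - a| := le_abs_self _
      _ = |M - a| / s ^ 2 * s ^ 2 := by field_simp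
      _ ≤ |M - a| / s ^ 2 * ‖w‖ ^ 2 := by gcongr
    have hlt' := hlt.trans_le (add_le_add_left (hM _ hq).le _)
    rw [← EReal.coe_add, EReal.coe_lt_coe_iff] at hlt'
    linarith
  refine ⟨by simpa using hws.trans_le (min_le_right r ρ), ?_⟩
  by_contra hx
  have hu : u (w, x) < a :=
    htube w (by simpa using hws.trans_le (min_le_left r ρ)) x ⟨subset_closure hq.2, hx⟩ hq
  have hnonpos : ((-(|M - a| / s ^ 2 * ‖w‖ ^ 2) : ℝ) : EReal) ≤ 0 :=
    EReal.coe_nonpos.2 (neg_nonpos.2 (by positivity))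
  exact (hlt.trans_le (add_le_of_nonpos_right hnonpos)).not_gt hu

lemma exists_isLocalMax_sub_penalty (hK : IsCompact K) (hKc : IsClosed K) (hρ : 0 < ρ)
    (husc : UpperSemicontinuousOn u (closedBall 0 ρ ×ˢ K))
    (htop : ∀ q ∈ closedBall 0 ρ ×ˢ K, u q < ⊤) (hfr : ∀ x ∈ frontier K, u (0, x) < a)
    {x₁ : X} (hx₁ : x₁ ∈ K) (ha : a < u (0, x₁)) :
    ∃ B : ℝ, ∃ q ∈ ball 0 ρ ×ˢ interior K, a < u q + ((-(B * ‖q.1‖ ^ 2) : ℝ) : EReal) ∧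
      IsLocalMax (fun q ↦ u q + ((-(B * ‖q.1‖ ^ 2) : ℝ) : EReal)) q := by
  obtain ⟨B, hB⟩ := exists_forall_mem_interior_of_lt_sub_penalty hK hKc hρ husc htop hfr
  have hmem₁ : ((0 : E), x₁) ∈ closedBall 0 ρ ×ˢ K := ⟨mem_closedBall_self hρ.le, hx₁⟩
  have hpenalty : UpperSemicontinuousOn
      (fun q : E × X ↦ u q + ((-(B * ‖q.1‖ ^ 2) : ℝ) : EReal)) (closedBall 0 ρ ×ˢ K) :=
    upperSemicontinuousOn_add_coe husc (by fun_prop)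
  obtain ⟨q, hq, hmax⟩ :=
    hpenalty.exists_isMaxOn ⟨_, hmem₁⟩ ((isCompact_closedBall 0 ρ).prod hK)
  have hlt : a < u q + ((-(B * ‖q.1‖ ^ 2) : ℝ) : EReal) :=
    lt_of_lt_of_le (by simpa using ha) (hmax hmem₁)
  have hqint := hB q hq hlt
  refine ⟨B, q, hqint, hlt, hmax.isLocalMax <| Filter.mem_of_superset
    ((isOpen_ball.prod isOpen_interior).mem_nhds hqint)
    (prod_mono ball_subset_closedBall interior_subset)⟩

end PenalizedMaximum

section MaximumPrinciple

open InnerProductSpace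

variable {n : ℕ} {φ : Cn n → EReal} {D : Set (Cn n)}

lemma exists_pos_forall_mul_lt_of_isCompact {X : Type*} [TopologicalSpace X] {K : Set X}
    (hK : IsCompact K) {f : X → ℝ} (hf : ContinuousOn f K) {c : ℝ} (hc : 0 < c) :
    ∃ ε > 0, ∀ x ∈ K, ε * f x < c := by
  obtain ⟨C, hC⟩ := hK.exists_bound_of_continuousOn hf
  obtain ⟨ε, hε, hεC⟩ := exists_pos_mul_lt hc C
  refine ⟨ε, hε, fun x hx ↦ lt_of_le_of_lt ?_ hεC⟩
  rw [mul_comm]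
  gcongr
  exact (le_abs_self _).trans (hC x hx)

lemma exists_pos_forall_add_mem_of_isCompact {X E : Type*} [TopologicalSpace X]
    [SeminormedAddCommGroup E] {K : Set X} (hK : IsCompact K) {g : X → E} (hg : ContinuousOn g K)
    {D : Set E} (hD : IsOpen D) (hgD : MapsTo g K D) :
    ∃ ρ > 0, ∀ x ∈ K, ∀ w ∈ closedBall 0 ρ, g x + w ∈ D := by
  obtain ⟨ρ, hρ, hρD⟩ :=
    (hK.image_of_continuousOn hg).exists_cthickening_subset_open hD hgD.image_subset
  refine ⟨ρ, hρ, fun x hx w hw ↦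
    hρD (mem_cthickening_of_dist_le _ (g x) ρ _ (mem_image_of_mem g hx) ?_)⟩
  simpa using hw

lemma PSHOn.comp_le_of_forall_frontier_le (hφ : PSHOn φ D) (hD : IsOpen D)
    (htop : ∀ x ∈ D, φ x < ⊤) {K : Set ℂ} (hK : IsCompact K) {g : ℂ → Cn n} {h : ℂ → ℝ}
    (hgc : ContinuousOn g K) (hg : DifferentiableOn ℂ g (interior K)) (hgD : MapsTo g K D)
    (hhc : ContinuousOn h K) (hh : HarmonicOnNhd h (interior K))
    (hle : ∀ ζ ∈ frontier K, φ (g ζ) ≤ h ζ) {ζ : ℂ} (hζ : ζ ∈ K) : φ (g ζ) ≤ h ζ := by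
  by_contra! hlt
  obtain ⟨b, hhb, hb⟩ := EReal.lt_iff_exists_real_btwn.1 hlt
  obtain ⟨ε, hε, hεK⟩ := exists_pos_forall_mul_lt_of_isCompact hK (f := fun ξ : ℂ ↦ ‖ξ‖ ^ 2)
    (by fun_prop) (sub_pos.2 (EReal.coe_lt_coe_iff.1 hhb))
  obtain ⟨ρ, hρ, hρD⟩ := exists_pos_forall_add_mem_of_isCompact hK hgc hD hgD
  have husc : UpperSemicontinuousOn (fun q : Cn n × ℂ ↦
      φ (g q.2 + q.1) + ((ε * ‖q.2‖ ^ 2 - h q.2 : ℝ) : EReal)) (closedBall 0 ρ ×ˢ K) := by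
    have hgK : ContinuousOn (fun q : Cn n × ℂ ↦ g q.2) (closedBall 0 ρ ×ˢ K) :=
      hgc.comp continuousOn_snd fun q hq ↦ hq.2
    have hhK : ContinuousOn (fun q : Cn n × ℂ ↦ h q.2) (closedBall 0 ρ ×ˢ K) :=
      hhc.comp continuousOn_snd fun q hq ↦ hq.2
    exact upperSemicontinuousOn_add_coe
      (hφ.1.comp (hgK.add continuousOn_fst) fun q hq ↦ hρD q.2 hq.2 q.1 hq.1)
      (ContinuousOn.sub (by fun_prop) hhK)
  have hfr (ξ : ℂ) (hξ : ξ ∈ frontier K) :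
      φ (g ξ + 0) + ((ε * ‖ξ‖ ^ 2 - h ξ : ℝ) : EReal) < ((b - h ζ : ℝ) : EReal) := calc
    _ ≤ (h ξ : EReal) + ((ε * ‖ξ‖ ^ 2 - h ξ : ℝ) : EReal) := by
      rw [add_zero]; gcongr; exact hle ξ hξ
    _ = ((ε * ‖ξ‖ ^ 2 : ℝ) : EReal) := by rw [← EReal.coe_add, add_sub_cancel]
    _ < ((b - h ζ : ℝ) : EReal) :=
      EReal.coe_lt_coe_iff.2 (hεK ξ (hK.isClosed.frontier_subset hξ))
  have hgap : ((b - h ζ : ℝ) : EReal) < φ (g ζ + 0) + ((ε * ‖ζ‖ ^ 2 - h ζ : ℝ) : EReal) := calc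
    ((b - h ζ : ℝ) : EReal) ≤ (b : EReal) + ((ε * ‖ζ‖ ^ 2 - h ζ : ℝ) : EReal) := by
      rw [← EReal.coe_add, EReal.coe_le_coe_iff]
      linarith [show 0 ≤ ε * ‖ζ‖ ^ 2 by positivity]
    _ < _ := by rw [add_zero]; exact EReal.add_lt_add_right_coe hb _
  obtain ⟨B, ⟨w, ξ⟩, ⟨hw, hξ⟩, hgt, hmax⟩ := exists_isLocalMax_sub_penalty hK hK.isClosed hρ husc
    (fun q hq ↦ EReal.add_lt_top (htop _ (hρD q.2 hq.2 q.1 hq.1)).ne (EReal.coe_ne_top _))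
    hfr hζ hgap
  have hx : g ξ + w ∈ D := hρD ξ (interior_subset hξ) w (ball_subset_closedBall hw)
  refine hφ.not_isLocalMax_translate hD (hg.analyticAt (isOpen_interior.mem_nhds hξ)) (hh ξ hξ)
    hε B hx (fun hbot ↦ ?_) (htop _ hx).ne hmax
  simp [hbot] at hgt

end MaximumPrinciple

section TwoConstants

open InnerProductSpace

variable {n : ℕ} {φ : Cn n → EReal} {D : Set (Cn n)}

lemma harmonicAt_mul_log_norm_sub_div {ζ : ℂ} (hζ : ζ ≠ 0) (c b d : ℝ) :
    HarmonicAt (fun ξ : ℂ ↦ c * ((Real.log ‖ξ‖ - b) / d)) ζ := by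
  have := (((analyticAt_id (𝕜 := ℂ) (z := ζ)).harmonicAt_log_norm hζ).sub
    (harmonicAt_const b)).const_smul (c := c / d)
  convert this using 2
  simp; ring

lemma PSHOn.comp_le_of_mem_annulus (hφ : PSHOn φ D) (hD : IsOpen D) (htop : ∀ x ∈ D, φ x < ⊤)
    {δ s : ℝ} (hδ : 0 < δ) (hδs : δ < s) {g : ℂ → Cn n}
    (hg : DifferentiableOn ℂ g (norm ⁻¹' Icc δ s)) (hgD : MapsTo g (norm ⁻¹' Icc δ s) D) {c : ℝ}
    (hc : ∀ ζ ∈ sphere 0 δ, φ (g ζ) ≤ c) (h0 : ∀ ζ ∈ sphere 0 s, φ (g ζ) ≤ 0) {ζ : ℂ}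
    (hζ : ‖ζ‖ ∈ Icc δ s) :
    φ (g ζ) ≤ ((c * ((Real.log ‖ζ‖ - Real.log s) / (Real.log δ - Real.log s)) : ℝ) : EReal) := by
  have hK : IsCompact (norm ⁻¹' Icc δ s : Set ℂ) :=
    isCompact_of_isClosed_isBounded (isClosed_Icc.preimage continuous_norm) <|
      (isBounded_closedBall (x := 0) (r := s)).subset fun ξ hξ ↦ by simpa using hξ.2
  have hharm : HarmonicOnNhd
      (fun ξ : ℂ ↦ c * ((Real.log ‖ξ‖ - Real.log s) / (Real.log δ - Real.log s)))
      (norm ⁻¹' Icc δ s) := fun ξ hξ ↦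
    harmonicAt_mul_log_norm_sub_div (norm_pos_iff.1 (hδ.trans_le hξ.1)) c _ _
  refine hφ.comp_le_of_forall_frontier_le hD htop hK hg.continuousOn (hg.mono interior_subset) hgD
    hharm.continuousOn (hharm.mono interior_subset) (fun ξ hξ ↦ ?_) hζ
  have hlog : Real.log δ - Real.log s ≠ 0 := sub_ne_zero.2 (Real.log_lt_log hδ hδs).ne
  have hξ' : ‖ξ‖ ∈ ({δ, s} : Set ℝ) :=
    frontier_Icc hδs.le ▸ continuous_norm.frontier_preimage_subset _ hξ
  rcases hξ' with hξ | hξ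
  · simpa [hξ, hlog] using hc ξ (by simpa using hξ)
  · have hξs : ‖ξ‖ = s := hξ
    simpa [hξs] using h0 ξ (by simpa using hξs)

lemma PSHOn.comp_le_mul_log_div_log (hφ : PSHOn φ D) (hD : IsOpen D)
    (hφ0 : ∀ x ∈ D, φ x ≤ 0) {g : ℂ → Cn n} (hg : DifferentiableOn ℂ g (ball 0 1))
    (hgD : MapsTo g (ball 0 1) D) {δ c : ℝ} (hδ0 : 0 < δ) (hδ1 : δ < 1)
    (hc : ∀ ζ ∈ sphere 0 δ, φ (g ζ) ≤ c) {ζ : ℂ} (hζδ : δ ≤ ‖ζ‖) (hζ1 : ‖ζ‖ < 1) :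
    φ (g ζ) ≤ ((c * (Real.log ‖ζ‖ / Real.log δ) : ℝ) : EReal) := by
  have hannulus (s : ℝ) (hs : s ∈ Ioo ‖ζ‖ 1) :
      φ (g ζ) ≤ ((c * ((Real.log ‖ζ‖ - Real.log s) / (Real.log δ - Real.log s)) : ℝ) : EReal) := by
    have hsub : (norm ⁻¹' Icc δ s : Set ℂ) ⊆ ball 0 1 := fun ξ hξ ↦ by
      simpa using hξ.2.trans_lt hs.2
    have hδs : δ < s := hζδ.trans_lt hs.1
    refine hφ.comp_le_of_mem_annulus hD (fun x hx ↦ (hφ0 x hx).trans_lt EReal.zero_lt_top) hδ0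
      hδs (hg.mono hsub) (hgD.mono_left hsub) hc (fun ξ hξ ↦ hφ0 _ (hgD (hsub ?_))) ⟨hζδ, hs.1.le⟩
    have hξs : ‖ξ‖ = s := by simpa using hξ
    exact ⟨hξs ▸ hδs.le, hξs.le⟩
  have hcont : ContinuousAt (fun s : ℝ ↦
      ((c * ((Real.log ‖ζ‖ - Real.log s) / (Real.log δ - Real.log s)) : ℝ) : EReal)) 1 := by
    have hlog := Real.continuousAt_log one_ne_zero
    have hne : Real.log δ - Real.log 1 ≠ 0 := by simpa using (Real.log_neg hδ0 hδ1).ne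
    exact continuous_coe_real_ereal.continuousAt.comp (by fun_prop (disch := exact hne))
  have hlim := hcont.tendsto.mono_left (nhdsWithin_le_nhds (s := Iio 1))
  rw [Real.log_one, sub_zero, sub_zero] at hlim
  exact ge_of_tendsto hlim (mem_of_superset (Ioo_mem_nhdsLT hζ1) hannulus)

end TwoConstants

section Disc

lemma exists_differentiableOn_ball_swap {a : ℂ} (ha : ‖a‖ < 1) :
    ∃ ψ : ℂ → ℂ, DifferentiableOn ℂ ψ (ball 0 1) ∧ MapsTo ψ (ball 0 1) (ball 0 1) ∧
      ψ 0 = a ∧ ψ a = 0 := by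
  have hne (ζ : ℂ) (hζ : ζ ∈ ball 0 1) : 1 - starRingEnd ℂ a * ζ ≠ 0 := by
    refine sub_ne_zero.2 fun h ↦ ?_
    have hnorm : ‖a‖ * ‖ζ‖ = 1 := by simpa using (congrArg norm h).symm
    exact (mul_lt_one_of_nonneg_of_lt_one_left (norm_nonneg a) ha
      (mem_ball_zero_iff.1 hζ).le).ne hnorm
  refine ⟨fun ζ ↦ (a - ζ) / (1 - starRingEnd ℂ a * ζ),
    DifferentiableOn.div (by fun_prop) (by fun_prop) hne, fun ζ hζ ↦ ?_, by simp, by simp⟩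
  rw [mem_ball_zero_iff, norm_div, div_lt_one (norm_pos_iff.2 (hne ζ hζ))]
  refine lt_of_pow_lt_pow_left₀ 2 (norm_nonneg _) (sub_pos.1 ?_)
  have hidentity : ‖1 - starRingEnd ℂ a * ζ‖ ^ 2 - ‖a - ζ‖ ^ 2 =
      (1 - ‖a‖ ^ 2) * (1 - ‖ζ‖ ^ 2) := by
    simp only [Complex.sq_norm, Complex.normSq_apply, Complex.sub_re, Complex.sub_im,
      Complex.mul_re, Complex.mul_im, Complex.conj_re, Complex.conj_im, Complex.one_re,
      Complex.one_im]
    ring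
  rw [hidentity]
  exact mul_pos (sub_pos.2 (pow_lt_one₀ (norm_nonneg _) ha two_ne_zero))
    (sub_pos.2 (pow_lt_one₀ (norm_nonneg _) (mem_ball_zero_iff.1 hζ) two_ne_zero))

lemma dist_le_diam_mul_norm_of_mapsTo {E : Type*} [NormedAddCommGroup E] [NormedSpace ℂ E]
    {D : Set E} (hD : Bornology.IsBounded D) {g : ℂ → E} (hg : DifferentiableOn ℂ g (ball 0 1))
    (hgD : MapsTo g (ball 0 1) D) {ζ : ℂ} (hζ : ζ ∈ ball 0 1) :
    dist (g ζ) (g 0) ≤ diam D * ‖ζ‖ := by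
  have h0 : g 0 ∈ D := hgD (mem_ball_self one_pos)
  simpa using Complex.dist_le_div_mul_dist_of_mapsTo_ball hg
    (fun ξ hξ ↦ dist_le_diam_of_mem hD (hgD hξ) h0) hζ

lemma notMem_of_mapsTo_of_thickening_subset {E : Type*} [NormedAddCommGroup E] [NormedSpace ℂ E]
    {D W U : Set E} (hD : Bornology.IsBounded D) {g : ℂ → E} (hg : DifferentiableOn ℂ g (ball 0 1))
    (hgD : MapsTo g (ball 0 1) D) {d : ℝ} (hWU : thickening d W ⊆ U) (h0 : g 0 ∉ U) {ζ : ℂ}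
    (hζ : ‖ζ‖ < 1) (hζd : diam D * ‖ζ‖ < d) : g ζ ∉ W := fun hW ↦ by
  refine h0 (hWU (mem_thickening_iff.2 ⟨g ζ, hW, ?_⟩))
  rw [dist_comm]
  exact (dist_le_diam_mul_norm_of_mapsTo hD hg hgD (by simpa using hζ)).trans_lt hζd

end Disc

section Exit

variable {n : ℕ} {φ : Cn n → EReal} {D : Set (Cn n)}

lemma PSHOn.exists_pos_mul_le_log_norm_of_notMem (hφ : PSHOn φ D) (hD : IsOpen D)
    (hDb : Bornology.IsBounded D) (hφ0 : ∀ x ∈ D, φ x ≤ 0) {W U : Set (Cn n)} {d : ℝ} (hd : 0 < d)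
    (hWU : thickening d W ⊆ U) {c : ℝ} (hc : c < 0) (hφc : ∀ x ∈ D \ W, φ x ≤ c) :
    ∃ m : ℝ, 0 < m ∧ ∀ f : ℂ → Cn n, DifferentiableOn ℂ f (ball 0 1) → MapsTo f (ball 0 1) D →
      f 0 ∈ W → ∀ ζ ∈ ball (0 : ℂ) 1, f ζ ∉ U →
      (m : EReal) * φ (f 0) ≤ ((Real.log ‖ζ‖ : ℝ) : EReal) := by
  obtain ⟨δ, hδ0, hδ1, hδd⟩ : ∃ δ : ℝ, 0 < δ ∧ δ < 1 ∧ diam D * δ < d := by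
    obtain ⟨δ, hδ, hδd⟩ := exists_pos_mul_lt hd (diam D)
    refine ⟨min δ (1 / 2), by positivity, (min_le_right _ _).trans_lt (by norm_num), ?_⟩
    exact (mul_le_mul_of_nonneg_left (min_le_left _ _) diam_nonneg).trans_lt hδd
  have hlogδ : Real.log δ < 0 := Real.log_neg hδ0 hδ1
  refine ⟨Real.log δ / c, div_pos_of_neg_of_neg hlogδ hc, fun f hf hfD hfW ζ₁ hζ₁ hζ₁U ↦ ?_⟩
  obtain ⟨ψ, hψ, hψ_maps, hψ0, hψζ₁⟩ := exists_differentiableOn_ball_swap (by simpa using hζ₁)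
  have hg : DifferentiableOn ℂ (f ∘ ψ) (ball 0 1) := hf.comp hψ hψ_maps
  have hgD : MapsTo (f ∘ ψ) (ball 0 1) D := hfD.comp hψ_maps
  have hnotW (ζ : ℂ) (hζ : ‖ζ‖ ≤ δ) : f (ψ ζ) ∉ W :=
    notMem_of_mapsTo_of_thickening_subset hDb hg hgD hWU (by simpa [hψ0]) (hζ.trans_lt hδ1)
      ((mul_le_mul_of_nonneg_left hζ diam_nonneg).trans_lt hδd)
  have hδζ₁ : δ ≤ ‖ζ₁‖ := by
    by_contra! hlt
    exact hnotW ζ₁ hlt.le (by rwa [hψζ₁])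
  have htwo : φ (f (ψ ζ₁)) ≤ ((c * (Real.log ‖ζ₁‖ / Real.log δ) : ℝ) : EReal) := by
    refine hφ.comp_le_mul_log_div_log hD hφ0 hg hgD hδ0 hδ1 (fun ζ hζ ↦ ?_) hδζ₁
      (by simpa using hζ₁)
    have hζδ : ‖ζ‖ = δ := by simpa using hζ
    exact hφc _ ⟨hgD (by simpa [hζδ] using hδ1), hnotW ζ hζδ.le⟩
  rw [hψζ₁] at htwo
  calc ((Real.log δ / c : ℝ) : EReal) * φ (f 0)
      ≤ ((Real.log δ / c : ℝ) : EReal) * ((c * (Real.log ‖ζ₁‖ / Real.log δ) : ℝ) : EReal) :=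
        mul_le_mul_of_nonneg_left htwo
          (EReal.coe_nonneg.2 (div_pos_of_neg_of_neg hlogδ hc).le)
    _ = ((Real.log ‖ζ₁‖ : ℝ) : EReal) := by
        rw [← EReal.coe_mul, EReal.coe_eq_coe_iff]
        field_simp [hlogδ.ne, hc.ne]

end Exit

section Erexp

lemma erexp_nonneg (x : EReal) : 0 ≤ erexp x := by
  unfold erexp
  split_ifs <;> positivity

lemma erexp_le_of_le_log {x : EReal} {t : ℝ} (ht : 0 < t) (hx : x ≤ Real.log t) :
    erexp x ≤ t := by
  induction x with
  | bot => simpa [erexp] using ht.le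
  | top => simpa [erexp] using ht.le
  | coe y => simpa [erexp] using (Real.le_log_iff_exp_le ht).1 (EReal.coe_le_coe_iff.1 hx)

end Erexp

section Kobayashi

variable {n : ℕ} {D Ω : Set (Cn n)} {z : Cn n}

lemma kobayashi_nonneg (D : Set (Cn n)) (z X : Cn n) : 0 ≤ kobayashi D z X := by
  refine Real.sInf_nonneg ?_
  rintro _ ⟨α, rfl, -⟩
  exact norm_nonneg α

lemma kobayashi_le_norm {f : ℂ → Cn n} (hf : DifferentiableOn ℂ f (ball 0 1))
    (hfD : MapsTo f (ball 0 1) D) (α : ℂ) : kobayashi D (f 0) (α • deriv f 0) ≤ ‖α‖ := by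
  refine csInf_le ⟨0, ?_⟩ ⟨α, rfl, f, hf, hfD, rfl, rfl⟩
  rintro _ ⟨β, rfl, -⟩
  exact norm_nonneg β

lemma exists_disc_smul_deriv_eq (hD : IsOpen D) (hz : z ∈ D) (X : Cn n) :
    ∃ α : ℂ, ∃ f : ℂ → Cn n, DifferentiableOn ℂ f (ball 0 1) ∧ MapsTo f (ball 0 1) D ∧
      f 0 = z ∧ α • deriv f 0 = X := by
  obtain ⟨ρ, hρ, hball⟩ := Metric.isOpen_iff.1 hD z hz
  obtain ⟨t, ht, htρ⟩ := exists_pos_mul_lt hρ ‖X‖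
  refine ⟨(t : ℂ)⁻¹, fun ζ ↦ z + ζ • (t : ℂ) • X, by fun_prop, fun ζ hζ ↦ hball ?_, by simp, ?_⟩
  · have hζ1 : ‖ζ‖ ≤ 1 := (mem_ball_zero_iff.1 hζ).le
    rw [mem_ball_iff_norm, add_sub_cancel_left, norm_smul, norm_smul, Complex.norm_of_nonneg ht.le,
      mul_comm t]
    exact (mul_le_of_le_one_left (by positivity) hζ1).trans_lt htρ
  · have hderiv : HasDerivAt (fun ζ : ℂ ↦ z + ζ • (t : ℂ) • X) ((t : ℂ) • X) 0 := by
      simpa using ((hasDerivAt_id (0 : ℂ)).smul_const ((t : ℂ) • X)).const_add z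
    rw [hderiv.deriv, inv_smul_smul₀ (by exact_mod_cast ht.ne')]

lemma mul_kobayashi_le_of_forall_mapsTo (hD : IsOpen D) (hz : z ∈ D) {r : ℝ} (hr0 : 0 ≤ r)
    (hr1 : r ≤ 1)
    (hdisc : ∀ f : ℂ → Cn n, DifferentiableOn ℂ f (ball 0 1) → MapsTo f (ball 0 1) D → f 0 = z →
      MapsTo f (ball 0 r) Ω) (X : Cn n) :
    r * kobayashi Ω z X ≤ kobayashi D z X := by
  rcases hr0.eq_or_lt with rfl | hr
  · simpa using kobayashi_nonneg D z X
  obtain ⟨α, hα⟩ := exists_disc_smul_deriv_eq hD hz X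
  refine le_csInf ⟨‖α‖, α, rfl, hα⟩ ?_
  rintro _ ⟨β, rfl, f, hf, hfD, rfl, rfl⟩
  have hscale : MapsTo (fun ζ : ℂ ↦ (r : ℂ) * ζ) (ball 0 1) (ball 0 r) := fun ζ hζ ↦ by
    simpa [abs_of_pos hr] using mul_lt_of_lt_one_right hr (mem_ball_zero_iff.1 hζ)
  have hle := kobayashi_le_norm (D := Ω) (f := fun ζ ↦ f (r * ζ))
    (hf.comp (by fun_prop) (hscale.mono_right (ball_subset_ball hr1)))
    ((hdisc f hf hfD rfl).comp hscale) (β / r)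
  rw [deriv_comp_mul_left, mul_zero, smul_smul, div_mul_cancel₀ _ (by exact_mod_cast hr.ne'),
    norm_div, Complex.norm_of_nonneg hr.le, le_div_iff₀ hr] at hle
  rwa [mul_comm]

end Kobayashi

section PeakFunction

variable {n : ℕ} {D : Set (Cn n)} {p : Cn n} {φ : Cn n → EReal}

lemma IsPshPeakFn.nonpos (hφ : IsPshPeakFn D p φ) (hp : p ∉ D) {z : Cn n} (hz : z ∈ D) :
    φ z ≤ 0 := by
  obtain ⟨c, hc, hle⟩ := hφ.2.2 {z}ᶜ (compl_singleton_mem_nhds fun h ↦ hp (h ▸ hz))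
  exact (hle z ⟨hz, by simp⟩).trans (EReal.coe_nonpos.2 hc.le)

lemma IsPshPeakFn.exists_subset_thickening_subset (hφ : IsPshPeakFn D p φ)
    {V U : Set (Cn n)} (hU : IsOpen U) (hpU : p ∈ U)
    (hVc : IsCompact (closure V)) (hVU : closure V ⊆ U) :
    ∃ W, V ⊆ W ∧ (∃ d > 0, thickening d W ⊆ U) ∧ ∃ c : ℝ, c < 0 ∧ ∀ z ∈ D \ W, φ z ≤ c := by
  obtain ⟨d, hd, hdU⟩ :=
    (hVc.insert p).exists_thickening_subset_open hU (insert_subset hpU hVU)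
  have hW := self_subset_thickening (half_pos hd) (insert p (closure V))
  refine ⟨thickening (d / 2) (insert p (closure V)),
    subset_closure.trans ((subset_insert p _).trans hW), ⟨d / 2, half_pos hd, ?_⟩,
    hφ.2.2 _ (isOpen_thickening.mem_nhds (hW (mem_insert p _)))⟩
  exact (thickening_thickening_subset _ _ _).trans (by rwa [add_halves])

end PeakFunction

theorem kobayashi_localization_peak_bounded_general {n : ℕ} {D : Set (Cn n)} (hD : IsOpen D)
    (hDb : Bornology.IsBounded D) {φ : Cn n → EReal} (hφ : PSHOn φ D) (hφ0 : ∀ z ∈ D, φ z ≤ 0)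
    {W U : Set (Cn n)} {d : ℝ} (hd : 0 < d) (hWU : thickening d W ⊆ U) {c : ℝ} (hc : c < 0)
    (hφc : ∀ z ∈ D \ W, φ z ≤ c) :
    ∃ m : ℝ, 0 < m ∧ ∀ z ∈ D ∩ W, ∀ X : Cn n,
      kobayashi D z X ≥ erexp ((m : EReal) * φ z) * kobayashi (D ∩ U) z X := by
  obtain ⟨m, hm, hexit⟩ := hφ.exists_pos_mul_le_log_norm_of_notMem hD hDb hφ0 hd hWU hc hφc
  have herexp (z : Cn n) (hz : z ∈ D) : erexp ((m : EReal) * φ z) ≤ 1 := by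
    refine erexp_le_of_le_log one_pos ?_
    simpa using mul_nonpos_of_nonneg_of_nonpos (EReal.coe_nonneg.2 hm.le) (hφ0 z hz)
  refine ⟨m, hm, fun z hz X ↦
    mul_kobayashi_le_of_forall_mapsTo hD hz.1 (erexp_nonneg _) (herexp z hz.1) ?_ X⟩
  rintro f hf hfD rfl ζ hζ
  have hζ1 : ζ ∈ ball 0 1 := ball_subset_ball (herexp (f 0) hz.1) hζ
  refine ⟨hfD hζ1, by_contra fun hζU ↦ ?_⟩
  have hζ0 : ζ ≠ 0 := by
    rintro rfl
    exact hζU (hWU (self_subset_thickening hd W hz.2))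
  exact (erexp_le_of_le_log (norm_pos_iff.2 hζ0) (hexit f hf hfD hz.2 ζ hζ1 hζU)).not_gt
    (mem_ball_zero_iff.1 hζ)

/-- For a bounded domain, the quantitative localization of the Kobayashi
metric near a psh peak point holds for an arbitrary neighborhood `V ⋐ U` of `p`. -/
theorem kobayashi_localization_peak_bounded {n : ℕ} (D : Set (Cn n)) (hD : IsOpen D)
    (hDconn : IsConnected D) (hDb : Bornology.IsBounded D) (p : Cn n) (hp : p ∈ frontier D)
    (φ : Cn n → EReal) (hφ : IsPshPeakFn D p φ)
    (U : Set (Cn n)) (hU : IsOpen U) (hUb : Bornology.IsBounded U) (hpU : p ∈ U)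
    (V : Set (Cn n)) (hV : IsOpen V) (hpV : p ∈ V) (hVc : IsCompact (closure V))
    (hVU : closure V ⊆ U) :
    ∃ m : ℝ, 0 < m ∧ ∀ z ∈ D ∩ V, ∀ X : Cn n,
      kobayashi D z X ≥ erexp ((m : EReal) * φ z) * kobayashi (D ∩ U) z X := by
  obtain ⟨W, hVW, ⟨d, hd, hWU⟩, c, hc, hφc⟩ := hφ.exists_subset_thickening_subset hU hpU hVc hVU
  exact (kobayashi_localization_peak_bounded_general hD hDb hφ.1
    (fun z hz ↦ hφ.nonpos (hD.interior_eq ▸ hp.2) hz) hd hWU hc hφc).imp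
    fun m h ↦ ⟨h.1, fun z hz ↦ h.2 z ⟨hz.1, hVW hz.2⟩⟩
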